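/- arXiv:2407.02435 — 2 statements merged into one kernel-verified Lean document; each statement's English description precedes it below -/
import Mathlib

section
/- Let A be a real n×m matrix with columns a₁, …, a_m ∈ ℝⁿ, and let λ₁ ≥ λ₂ ≥ … ≥ λ_n ≥ 0 denote the eigenvalues of the real symmetric positive semidefinite matrix A Aᵀ, listed with multiplicity in decreasing order. Then for every k ≤ n and every orthonormal family S₁, …, S_k in ℝⁿ (with the standard inner product), Σ_{j=1}^{m} ‖ a_j − Σ_{i=1}^{k} ⟨S_i, a_j⟩ S_i ‖² ≥ Σ_{i=k+1}^{n} λ_i. -/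
open Matrix
open scoped RealInnerProductSpace

/-- Weights in `[0, 1]` of total mass at most `k` leave at least the tail of a nonnegative
decreasing sequence. -/
lemma sum_tail_le_sum_mul_one_sub {n k : ℕ} {lam w : Fin n → ℝ} (hdec : Antitone lam)
    (hnonneg : ∀ i, 0 ≤ lam i) (hk : k ≤ n) (hw0 : ∀ i, 0 ≤ w i) (hw1 : ∀ i, w i ≤ 1)
    (hwk : ∑ i, w i ≤ k) :
    ∑ i ∈ Finset.univ.filter (fun i : Fin n => k ≤ (i : ℕ)), lam i
      ≤ ∑ i, lam i * (1 - w i) := by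
  obtain ⟨c, hc0, hcle, hcge⟩ : ∃ c : ℝ, 0 ≤ c ∧ (∀ i : Fin n, (i : ℕ) < k → c ≤ lam i) ∧
      ∀ i : Fin n, k ≤ (i : ℕ) → lam i ≤ c := by
    rcases hk.eq_or_lt with rfl | hlt
    · exact ⟨0, le_rfl, fun i _ => hnonneg i, fun i hi => absurd i.2 hi.not_gt⟩
    · exact ⟨lam ⟨k, hlt⟩, hnonneg _, fun i hi => hdec (Fin.le_def.2 hi.le),
        fun i hi => hdec (Fin.le_def.2 hi)⟩
  have hpt : ∀ i : Fin n, (if k ≤ (i : ℕ) then lam i else 0) ≤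
      lam i * (1 - w i) + c * (w i - if (i : ℕ) < k then 1 else 0) := by
    intro i
    by_cases hi : k ≤ (i : ℕ)
    · rw [if_pos hi, if_neg hi.not_gt]
      nlinarith [mul_nonneg (sub_nonneg.2 (hcge i hi)) (hw0 i)]
    · rw [if_neg hi, if_pos (not_le.1 hi)]
      nlinarith [mul_nonneg (sub_nonneg.2 (hcle i (not_le.1 hi))) (sub_nonneg.2 (hw1 i))]
  have hcard : ∑ i : Fin n, (if (i : ℕ) < k then (1 : ℝ) else 0) = k := by
    rw [Fin.sum_univ_eq_sum_range (fun i => if i < k then (1 : ℝ) else 0) n,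
      ← Finset.sum_filter, Finset.sum_const, nsmul_one]
    congr 1
    rw [show (Finset.range n).filter (· < k) = Finset.range k by ext; simp; omega,
      Finset.card_range]
  have hsum := Finset.sum_le_sum fun i (_ : i ∈ Finset.univ) => hpt i
  rw [Finset.sum_add_distrib, ← Finset.mul_sum, Finset.sum_sub_distrib, hcard] at hsum
  rw [Finset.sum_filter]
  nlinarith [mul_nonneg hc0 (sub_nonneg.2 hwk)]

section InnerProductSpace

variable {E ι κ : Type*} [NormedAddCommGroup E] [InnerProductSpace ℝ E] [Fintype ι] [Fintype κ]

/-- Pythagoras for the projection onto the span of a finite orthonormal family. -/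
lemma Orthonormal.norm_sub_sum_inner_smul_sq {S : ι → E} (hS : Orthonormal ℝ S) (x : E) :
    ‖x - ∑ i, ⟪S i, x⟫ • S i‖ ^ 2 = ‖x‖ ^ 2 - ∑ i, ⟪S i, x⟫ ^ 2 := by
  have hcross : ⟪x, ∑ i, ⟪S i, x⟫ • S i⟫ = ∑ i, ⟪S i, x⟫ ^ 2 := by
    simp only [inner_sum, inner_smul_right, real_inner_comm, sq]
  have hnorm : ‖∑ i, ⟪S i, x⟫ • S i‖ ^ 2 = ∑ i, ⟪S i, x⟫ ^ 2 := by
    rw [← real_inner_self_eq_norm_sq, hS.inner_sum]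
    simp [sq]
  rw [norm_sub_sq_real, hcross, hnorm]
  ring

/-- The quadratic form `x ↦ ∑ j, ⟪x, a j⟫ ^ 2` in an orthonormal basis of eigenvectors. -/
lemma OrthonormalBasis.sum_inner_sq_eq_sum_eigenvalue_mul (u : OrthonormalBasis ι ℝ E)
    {a : κ → E} {lam : ι → ℝ} (hu : ∀ i, ∑ j, ⟪u i, a j⟫ • a j = lam i • u i) (x : E) :
    ∑ j, ⟪x, a j⟫ ^ 2 = ∑ i, lam i * ⟪x, u i⟫ ^ 2 := by
  have hcoord : ∀ i, ⟪u i, ∑ j, ⟪x, a j⟫ • a j⟫ = lam i * ⟪x, u i⟫ := by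
    intro i
    rw [← inner_smul_right, ← hu i]
    simp only [inner_sum, inner_smul_right]
    exact Finset.sum_congr rfl fun j _ => mul_comm _ _
  have hform : ⟪x, ∑ j, ⟪x, a j⟫ • a j⟫ = ∑ j, ⟪x, a j⟫ ^ 2 := by
    simp only [inner_sum, inner_smul_right, sq]
  rw [← hform, ← u.sum_inner_mul_inner]
  refine Finset.sum_congr rfl fun i _ => ?_
  rw [hcoord]
  ring

end InnerProductSpace

/-- The eigenvector equation for `A * Aᵀ` in terms of the columns of `A`. -/
lemma Matrix.sum_inner_eigenvectorBasis_smul_col {n m : ℕ} {A : Matrix (Fin n) (Fin m) ℝ}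
    (hA : (A * Aᵀ).IsHermitian) {a : Fin m → EuclideanSpace ℝ (Fin n)}
    (ha : ∀ j i, a j i = A i j) (i : Fin n) :
    ∑ j, ⟪hA.eigenvectorBasis i, a j⟫ • a j = hA.eigenvalues i • hA.eigenvectorBasis i := by
  ext l
  have h := congrFun (hA.mulVec_eigenvectorBasis i) l
  rw [← Matrix.mulVec_mulVec] at h
  simp only [Matrix.mulVec, dotProduct, Matrix.transpose_apply, Pi.smul_apply] at h
  simp only [PiLp.smul_apply, WithLp.ofLp_sum, Finset.sum_apply, PiLp.inner_apply, ← h]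
  simp [ha, mul_comm]

/-- POD optimality lower bound: for any orthonormal family `S₁, …, S_k` in ℝⁿ,
the snapshot projection error is at least the tail sum `Σ_{i>k} λ_i` of the
decreasingly ordered eigenvalues of `A Aᵀ`. -/
theorem pod_projection_error_lower_bound
    (n m : ℕ) (A : Matrix (Fin n) (Fin m) ℝ)
    (hA : (A * Aᵀ).IsHermitian)
    (lam : Fin n → ℝ)
    (hdec : Antitone lam)
    (hnonneg : ∀ i, 0 ≤ lam i)
    (hperm : ∃ σ : Equiv.Perm (Fin n), ∀ i, lam i = hA.eigenvalues (σ i))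
    (k : ℕ) (hk : k ≤ n)
    (S : Fin k → EuclideanSpace ℝ (Fin n))
    (hS : Orthonormal ℝ S)
    (a : Fin m → EuclideanSpace ℝ (Fin n))
    (ha : ∀ j i, a j i = A i j) :
    ∑ i ∈ Finset.univ.filter (fun i : Fin n => k ≤ (i : ℕ)), lam i
      ≤ ∑ j : Fin m, ‖a j - ∑ i : Fin k, ⟪S i, a j⟫ • S i‖ ^ 2 := by
  obtain ⟨σ, hσ⟩ := hperm
  let u : OrthonormalBasis (Fin n) ℝ (EuclideanSpace ℝ (Fin n)) :=
    hA.eigenvectorBasis.reindex σ.symm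
  have hu : ∀ i, ∑ j, ⟪u i, a j⟫ • a j = lam i • u i := by
    intro i
    simpa [u, hσ i] using Matrix.sum_inner_eigenvectorBasis_smul_col hA ha (σ i)
  have hparseval : ∀ x : EuclideanSpace ℝ (Fin n), ∑ i, ⟪x, u i⟫ ^ 2 = ‖x‖ ^ 2 := by
    intro x
    simpa [real_inner_comm] using u.sum_sq_norm_inner_right x
  have htotal : ∑ j, ‖a j‖ ^ 2 = ∑ i, lam i := by
    simp_rw [← hparseval, Finset.sum_comm (s := (Finset.univ : Finset (Fin m)))]
    refine Finset.sum_congr rfl fun i _ => ?_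
    simp_rw [real_inner_comm (u i)]
    rw [u.sum_inner_sq_eq_sum_eigenvalue_mul hu]
    simp [orthonormal_iff_ite.1 u.orthonormal]
  have hcaptured : ∑ j, ∑ l, ⟪S l, a j⟫ ^ 2 = ∑ i, lam i * ∑ l, ⟪S l, u i⟫ ^ 2 := by
    rw [Finset.sum_comm]
    simp_rw [u.sum_inner_sq_eq_sum_eigenvalue_mul hu, Finset.mul_sum]
    exact Finset.sum_comm
  have herror : ∑ j, ‖a j - ∑ i, ⟪S i, a j⟫ • S i‖ ^ 2
      = ∑ i, lam i * (1 - ∑ l, ⟪S l, u i⟫ ^ 2) := by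
    simp_rw [hS.norm_sub_sum_inner_smul_sq, mul_sub, mul_one, Finset.sum_sub_distrib]
    rw [htotal, hcaptured]
  rw [herror]
  refine sum_tail_le_sum_mul_one_sub hdec hnonneg hk
    (fun i => Finset.sum_nonneg fun l _ => sq_nonneg _) (fun i => ?_) ?_
  · simpa using hS.sum_inner_products_le (u i) (s := Finset.univ)
  · rw [Finset.sum_comm]
    simp [hparseval, hS.1]
end

section
/- Let M, χ ∈ ℝ^{3×3}, let f_d > 0, σ_{y0} ≥ 0, Y₀ ≥ 0, and let q_p, q_d, Y, λ̇_p, λ̇_d ∈ ℝ. Write M̃ = (1/f_d)·M, χ̃ = (1/f_d)·χ, q̃_p = (1/f_d)·q_p, let (·)′ denote the deviatoric part A′ = A − (tr A/3)·I, let A : B = tr(Aᵀ B) and ‖A‖ = sqrt(A : A), and assume M̃′ − χ̃′ ≠ 0. Define the flow quantities D_p = λ̇_p · sqrt(3/2) · (1/f_d) · (M̃′ − χ̃′)/‖M̃′ − χ̃′‖, ξ̇_p = λ̇_p / f_d, Ḋ = λ̇_d, ξ̇_d = λ̇_d, and the yield and damage loading functions Φ_p = sqrt(3/2)·‖M̃′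 − χ̃′‖ − (σ_{y0} + q̃_p) and Φ_d = Y − (Y₀ + q_d). Assume the Karush–Kuhn–Tucker conditions λ̇_p ≥ 0, λ̇_d ≥ 0, λ̇_p·Φ_p = 0, λ̇_d·Φ_d = 0. Then (M − χ) : D_p − q_p·ξ̇_p − q_d·ξ̇_d + Y·Ḋ = λ̇_p·σ_{y0} + λ̇_d·Y₀ ≥ 0. -/
open Matrix

/-- The contraction of a matrix with its deviatoric part only sees the deviatoric part. -/
lemma trace_transpose_mul_deviator (A : Matrix (Fin 3) (Fin 3) ℝ) :
    trace (Aᵀ * (A - (trace A / 3) • (1 : Matrix (Fin 3) (Fin 3) ℝ))) =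
      trace ((A - (trace A / 3) • (1 : Matrix (Fin 3) (Fin 3) ℝ))ᵀ *
        (A - (trace A / 3) • (1 : Matrix (Fin 3) (Fin 3) ℝ))) := by
  simp [sub_mul, mul_sub, trace_sub, trace_smul, trace_one]

/-- Reduced dissipation inequality of the two-surface gradient-extended
damage-plasticity model: with the associative flow rules and the
Karush–Kuhn–Tucker conditions, the Clausius–Duhem residual satisfies
`(M − χ) : D_p − q_p ξ̇_p − q_d ξ̇_d + Y Ḋ = λ̇_p σ_y0 + λ̇_d Y₀ ≥ 0`.
Here `A : B = tr(Aᵀ B)`, `‖A‖ = sqrt(A : A)`, the deviatoric part is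
`A′ = A − (tr A/3) I`, and effective quantities are `(~·) = (·)/f_d`. -/
theorem two_surface_reduced_dissipation
    (M χ : Matrix (Fin 3) (Fin 3) ℝ)
    (fd σy0 Y0 qp qd Y lp ld : ℝ)
    (hfd : 0 < fd) (hσ : 0 ≤ σy0) (hY0 : 0 ≤ Y0)
    (Mt χt : Matrix (Fin 3) (Fin 3) ℝ)
    (hMt : Mt = fd⁻¹ • M) (hχt : χt = fd⁻¹ • χ)
    (qpt : ℝ) (hqpt : qpt = fd⁻¹ * qp)
    -- `N = M̃′ − χ̃′`
    (N : Matrix (Fin 3) (Fin 3) ℝ)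
    (hNdef : N = (Mt - (Matrix.trace Mt / 3) • (1 : Matrix (Fin 3) (Fin 3) ℝ))
                  - (χt - (Matrix.trace χt / 3) • (1 : Matrix (Fin 3) (Fin 3) ℝ)))
    (hNne : N ≠ 0)
    -- Frobenius norm `‖M̃′ − χ̃′‖`
    (nrm : ℝ) (hnrm : nrm = Real.sqrt (Matrix.trace (Nᵀ * N)))
    -- associative flow rules
    (Dp : Matrix (Fin 3) (Fin 3) ℝ)
    (hDp : Dp = (lp * Real.sqrt (3 / 2) * fd⁻¹ * nrm⁻¹) • N)
    (ξp' ξd' D' : ℝ)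
    (hξp : ξp' = lp / fd) (hD' : D' = ld) (hξd : ξd' = ld)
    -- yield and damage loading functions
    (Φp Φd : ℝ)
    (hΦp : Φp = Real.sqrt (3 / 2) * nrm - (σy0 + qpt))
    (hΦd : Φd = Y - (Y0 + qd))
    -- Karush–Kuhn–Tucker conditions
    (hlp : 0 ≤ lp) (hld : 0 ≤ ld)
    (hKKTp : lp * Φp = 0) (hKKTd : ld * Φd = 0) :
    Matrix.trace ((M - χ)ᵀ * Dp) - qp * ξp' - qd * ξd' + Y * D'
        = lp * σy0 + ld * Y0 ∧
      0 ≤ lp * σy0 + ld * Y0 := by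
  refine ⟨?_, by positivity⟩
  have hfd0 : fd ≠ 0 := hfd.ne'
  have hN : N = (Mt - χt) - (trace (Mt - χt) / 3) • (1 : Matrix (Fin 3) (Fin 3) ℝ) := by
    rw [hNdef, trace_sub, sub_div, sub_smul]
    abel
  have hM : M - χ = fd • (Mt - χt) := by
    rw [hMt, hχt, ← smul_sub, smul_inv_smul₀ hfd0]
  have hsq : trace (Nᵀ * N) = nrm * nrm := by
    rw [hnrm, Real.mul_self_sqrt]
    simpa [conjTranspose_eq_transpose_of_trivial] using
      (posSemidef_conjTranspose_mul_self N).trace_nonneg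
  have hcontr : trace ((M - χ)ᵀ * N) = fd * (nrm * nrm) := by
    rw [hM, transpose_smul, smul_mul_assoc, trace_smul, smul_eq_mul, ← hsq, hN,
      trace_transpose_mul_deviator]
  have hflow : trace ((M - χ)ᵀ * Dp) = lp * Real.sqrt (3 / 2) * nrm := by
    rw [hDp, mul_smul_comm, trace_smul, smul_eq_mul, hcontr]
    calc lp * Real.sqrt (3 / 2) * fd⁻¹ * nrm⁻¹ * (fd * (nrm * nrm))
        = lp * Real.sqrt (3 / 2) * (fd⁻¹ * fd) * (nrm * nrm * nrm⁻¹) := by ring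
      _ = lp * Real.sqrt (3 / 2) * nrm := by
        rw [inv_mul_cancel₀ hfd0, mul_self_mul_inv, mul_one]
  rw [hΦp, hqpt] at hKKTp
  rw [hΦd] at hKKTd
  rw [hflow, hξp, hξd, hD']
  linear_combination hKKTp + hKKTd
end
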